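/- For every integer s ≥ 1 and every rational number x, one has ∑_{j≥0, 2j+1≤s} (1/((2j+1)!·2^{2j})) · ∑_{k=0}^{s-2j-1} ((-1)^k/(k!·2^k·(s-2j-k-1)!)) · x^{s-2j-k-1} = x^s/s! − (x−1)^s/s!. -/

import Mathlib

theorem aux_binom (a b : ℚ) (n : ℕ) :
    ∑ m ∈ Finset.range (n + 1), a ^ m / (Nat.factorial m : ℚ) * (b ^ (n - m) / (Nat.factorial (n - m) : ℚ))
      = (a + b) ^ n / (Nat.factorial n : ℚ) := by
  rw [add_pow, Finset.sum_div]
  refine Finset.sum_congr rfl fun m hm => ?_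
  have hm' : m ≤ n := by simpa [Nat.lt_succ_iff] using hm
  rw [Nat.cast_choose ℚ hm']
  have h1 : (Nat.factorial n : ℚ) ≠ 0 := by positivity
  have h2 : (Nat.factorial m : ℚ) ≠ 0 := by positivity
  have h3 : (Nat.factorial (n - m) : ℚ) ≠ 0 := by positivity
  field_simp


/-- The central polynomial identity in the inductive step of the proof of Theorem 1:
`∑_{j≥0, 2j+1≤s} (1/((2j+1)!·2^{2j})) · ∑_{k=0}^{s-2j-1} ((-1)^k/(k!·2^k·(s-2j-k-1)!)) · x^{s-2j-k-1}`
equals `x^s/s! − (x−1)^s/s!`, for `s ≥ 1`. -/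
theorem stmt5 (s : ℕ) (hs : 1 ≤ s) (x : ℚ) :
    ∑ j ∈ (Finset.range s).filter (fun j => 2 * j + 1 ≤ s),
        (1 / ((Nat.factorial (2 * j + 1) : ℚ) * 2 ^ (2 * j))) *
          ∑ k ∈ Finset.range (s - 2 * j - 1 + 1),
            ((-1 : ℚ) ^ k /
                ((Nat.factorial k : ℚ) * 2 ^ k * (Nat.factorial (s - 2 * j - k - 1) : ℚ)))
              * x ^ (s - 2 * j - k - 1)
      = x ^ s / (Nat.factorial s : ℚ) - (x - 1) ^ s / (Nat.factorial s : ℚ) := by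

  have key : x ^ s / (Nat.factorial s : ℚ) - (x - 1) ^ s / (Nat.factorial s : ℚ)
      = ∑ m ∈ Finset.range (s + 1), ((1 / 2 : ℚ) ^ m - (-1 / 2) ^ m) / (Nat.factorial m : ℚ) *
          ((x - 1 / 2) ^ (s - m) / (Nat.factorial (s - m) : ℚ)) := by
    have h1 := aux_binom (1 / 2) (x - 1 / 2) s
    have h2 := aux_binom (-1 / 2) (x - 1 / 2) s
    rw [show (1 / 2 : ℚ) + (x - 1 / 2) = x by ring] at h1
    rw [show (-1 / 2 : ℚ) + (x - 1 / 2) = x - 1 by ring] at h2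
    rw [← h1, ← h2, ← Finset.sum_sub_distrib]
    refine Finset.sum_congr rfl fun m _ => ?_
    ring
  rw [key]
  refine Finset.sum_of_injOn (fun j => 2 * j + 1) ?_ ?_ ?_ ?_
  · intro a _ b _ h
    simp only at h
    omega
  · intro j hj
    simp only [Finset.coe_filter, Finset.mem_range, Set.mem_setOf_eq] at hj
    simp only [Finset.coe_range, Set.mem_Iio]
    omega
  · intro m hm hnot
    rcases Nat.even_or_odd m with he | ⟨j, rfl⟩
    · rw [show (-1 / 2 : ℚ) = -(1 / 2) by ring, he.neg_pow]
      simp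
    · exfalso
      apply hnot
      refine ⟨j, ?_, rfl⟩
      simp only [Finset.mem_range] at hm
      simp only [Finset.coe_filter, Finset.mem_range, Set.mem_setOf_eq]
      omega
  · intro j hj
    have hodd : Odd (2 * j + 1) := ⟨j, rfl⟩
    have hin := aux_binom (-1 / 2) x (s - 2 * j - 1)
    rw [show (-1 / 2 : ℚ) + x = x - 1 / 2 by ring] at hin
    rw [show (-1 / 2 : ℚ) ^ (2 * j + 1) = -(1 / 2) ^ (2 * j + 1) by
      rw [show (-1 / 2 : ℚ) = -(1 / 2) by ring, hodd.neg_pow]]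
    rw [show s - (2 * j + 1) = s - 2 * j - 1 by omega, ← hin]
    congr 1
    · rw [pow_succ, one_div_pow]
      have h2 : (Nat.factorial (2 * j + 1) : ℚ) ≠ 0 := by positivity
      field_simp
      ring
    · refine Finset.sum_congr rfl fun k _ => ?_
      rw [show s - 2 * j - 1 - k = s - 2 * j - k - 1 by omega, div_pow]
      have h2 : (Nat.factorial k : ℚ) ≠ 0 := by positivity
      have h3 : (Nat.factorial (s - 2 * j - k - 1) : ℚ) ≠ 0 := by positivity
      field_simp
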